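/- arXiv:2205.13930 — 8 statements merged into one kernel-verified Lean document; each statement's English description precedes it below -/
import Mathlib

section
/- Let k ≥ 2 and T ≥ 2 be integers, let μ* be a real with 32√(k·log k·log T/T) ≤ μ* ≤ 1, let n be a positive integer with n ≥ 8√(T·log T/(k·log k)), and let μ̂ ≥ 0 be a real with |μ* − μ̂| ≤ 3√(μ*·log T/n). Then μ̂ + 4√(μ̂·log T/n) ≥ μ*. (Deterministic core of Lemma 3.4: under the good event, the Nash confidence bound of the optimal arm is at least its true mean μ* throughout Phase II.) -/
/-- If `256 a ≤ m` and `x` is within `3√(m a)` of `m`, then `x + 4√(x a)` is at least `m`. -/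
lemma le_add_four_mul_sqrt_of_abs_sub_le {m x a : ℝ} (ha : 0 ≤ a) (ham : 256 * a ≤ m)
    (h : |m - x| ≤ 3 * Real.sqrt (m * a)) : m ≤ x + 4 * Real.sqrt (x * a) := by
  have hm : 0 ≤ m := by linarith
  have hsqrt_le : Real.sqrt (m * a) ≤ m / 16 := by
    apply Real.sqrt_le_iff.mpr ⟨by positivity, ?_⟩
    nlinarith
  have hdev : m - x ≤ 3 * Real.sqrt (m * a) := (le_abs_self _).trans h
  have hle : 3 / 4 * Real.sqrt (m * a) ≤ Real.sqrt (x * a) := by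
    apply Real.le_sqrt_of_sq_le
    rw [mul_pow, Real.sq_sqrt (by positivity)]
    nlinarith
  linarith

/-- Deterministic core of Lemma 3.4: under the good event, the Nash confidence bound
`μ̂ + 4√(μ̂ log T / n)` of the optimal arm is at least its true mean `μ*`. -/
theorem ncb_of_optimal_arm_ge_mean (k T : ℕ) (hk : 2 ≤ k) (hT : 2 ≤ T)
    (μstar : ℝ)
    (hμs_lb : 32 * Real.sqrt ((k : ℝ) * Real.log k * Real.log T / T) ≤ μstar)
    (hμs_ub : μstar ≤ 1)
    (n : ℕ) (hn0 : 0 < n)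
    (hn : 8 * Real.sqrt ((T : ℝ) * Real.log T / ((k : ℝ) * Real.log k)) ≤ (n : ℝ))
    (μhat : ℝ) (hμhat : 0 ≤ μhat)
    (hconc : |μstar - μhat| ≤ 3 * Real.sqrt (μstar * Real.log T / n)) :
    μhat + 4 * Real.sqrt (μhat * Real.log T / n) ≥ μstar := by
  have hk0 : (0 : ℝ) < k := by positivity
  have hT0 : (0 : ℝ) < T := by positivity
  have hn0' : (0 : ℝ) < n := by positivity
  have hlogk : 0 < Real.log k := Real.log_pos (by exact_mod_cast hk)
  have hlogT : 0 < Real.log T := Real.log_pos (by exact_mod_cast hT)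
  have hprod : Real.sqrt ((k : ℝ) * Real.log k * Real.log T / T) *
      Real.sqrt ((T : ℝ) * Real.log T / ((k : ℝ) * Real.log k)) = Real.log T := by
    rw [← Real.sqrt_mul (by positivity), Real.sqrt_eq_iff_mul_self_eq (by positivity) hlogT.le]
    field_simp
  have hmul := mul_le_mul hμs_lb hn (by positivity) (le_trans (by positivity) hμs_lb)
  have hratio : 256 * (Real.log T / n) ≤ μstar := by
    rw [← mul_div_assoc, div_le_iff₀ hn0']
    linarith
  rw [mul_div_assoc] at hconc ⊢
  exact le_add_four_mul_sqrt_of_abs_sub_le (by positivity) hratio hconc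
end

section
/- Let k ≥ 2 and T ≥ 2 be integers, let μ* be a real with 32√(k·log k·log T/T) ≤ μ* ≤ 1, let r be a positive integer with r ≥ 8√(T·log T/(k·log k)), and let μ̂ be a real with 0 ≤ μ̂ ≤ 9√(k·log k·log T)/√T. Then μ̂ + 4√(μ̂·log T/r) < μ*. (Deterministic core of Lemma 3.5: under the good event, any arm with mean at most 6√(k·log k·log T)/√T has Nash confidence bound strictly below μ* and hence is never pulled in Phase II.) -/
/-- Deterministic core of Lemma 3.5: under the good event, any arm whose empirical mean is
at most `9√(k log k log T)/√T` (after `r ≥ 8√(T log T/(k log k))` samples) has Nash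
confidence bound `μ̂ + 4√(μ̂ log T / r)` strictly below `μ*`. -/
theorem ncb_of_bad_arm_lt_optimal (k T : ℕ) (hk : 2 ≤ k) (hT : 2 ≤ T)
    (μstar : ℝ)
    (hμs_lb : 32 * Real.sqrt ((k : ℝ) * Real.log k * Real.log T / T) ≤ μstar)
    (hμs_ub : μstar ≤ 1)
    (r : ℕ) (hr0 : 0 < r)
    (hr : 8 * Real.sqrt ((T : ℝ) * Real.log T / ((k : ℝ) * Real.log k)) ≤ (r : ℝ))
    (μhat : ℝ) (hμhat0 : 0 ≤ μhat)
    (hμhat : μhat ≤ 9 * Real.sqrt ((k : ℝ) * Real.log k * Real.log T) / Real.sqrt T) :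
    μhat + 4 * Real.sqrt (μhat * Real.log T / r) < μstar := by
  have hk1 : (1 : ℝ) < k := by exact_mod_cast hk
  have hT1 : (1 : ℝ) < T := by exact_mod_cast hT
  have hr_pos : (0 : ℝ) < r := by exact_mod_cast hr0
  have hL : 0 < Real.log T := Real.log_pos hT1
  have ha : 0 < (k : ℝ) * Real.log k := mul_pos (by linarith) (Real.log_pos hk1)
  rw [mul_div_assoc, ← Real.sqrt_div (by positivity)] at hμhat
  set a : ℝ := (k : ℝ) * Real.log k
  set L : ℝ := Real.log T
  set s : ℝ := Real.sqrt (a * L / T)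
  set q : ℝ := Real.sqrt (T * L / a)
  have hs : 0 < s := Real.sqrt_pos.mpr (by positivity)
  have hsq : s * q = L := by
    have hprod : a * L / T * (T * L / a) = L ^ 2 := by field_simp
    rw [← Real.sqrt_mul (by positivity), hprod, Real.sqrt_sq hL.le]
  have hLr : L / r ≤ s / 8 := by
    rw [div_le_iff₀ hr_pos]
    nlinarith
  have hwidth : Real.sqrt (μhat * L / r) ≤ 2 * s := by
    refine Real.sqrt_le_iff.mpr ⟨by positivity, ?_⟩
    calc μhat * L / r = μhat * (L / r) := mul_div_assoc _ _ _
      _ ≤ 9 * s * (s / 8) := by gcongr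
      _ ≤ (2 * s) ^ 2 := by nlinarith
  linarith
end

section
/- Let k ≥ 2 and T ≥ 2 be integers, let μ* be a real with 32√(k·log k·log T/T) ≤ μ* ≤ 1, let μ be a real with 0 < μ ≤ μ*, let n be a positive integer with n ≥ 8√(T·log T/(k·log k)), and let μ̂ ≥ 0 be a real such that |μ − μ̂| ≤ 3√(μ·log T/n) and μ̂ + 4√(μ̂·log T/n) ≥ μ*. Then μ ≥ μ* − 8√(μ*·log T/n). (Deterministic core of Lemma 3.6: any arm pulled in Phase II, having Nash confidence bound at least μ* after n = T_i − 1 samples, has mean close to the optimal μ*.) -/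
/-- The lower bounds on the optimal mean and on the sample count multiply to
`256 log T ≤ μ* n`. -/
lemma log_le_mul_of_sqrt_le {c t l m n : ℝ} (hc : 0 < c) (ht : 0 < t) (hl : 0 ≤ l)
    (hm : 32 * Real.sqrt (c * l / t) ≤ m) (hn : 8 * Real.sqrt (t * l / c) ≤ n) :
    256 * l ≤ m * n := by
  have hprod : Real.sqrt (c * l / t) * Real.sqrt (t * l / c) = l := by
    rw [← Real.sqrt_mul (by positivity),
      show c * l / t * (t * l / c) = l ^ 2 by field_simp, Real.sqrt_sq hl]
  calc 256 * l = (32 * Real.sqrt (c * l / t)) * (8 * Real.sqrt (t * l / c)) := by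
        linear_combination -256 * hprod
    _ ≤ m * n := mul_le_mul hm hn (by positivity) (le_trans (by positivity) hm)

/-- The confidence-bound argument in terms of the square roots `s`, `a`, `b`, `r` of the optimal
mean, the mean, the empirical mean and `log T / n`. -/
lemma sq_sub_le_sq_of_confidence_bound {s a b r : ℝ} (hs : 0 ≤ s) (hr : 0 ≤ r)
    (ha : 0 ≤ a) (has : a ≤ s) (hrs : 16 * r ≤ s)
    (hconc : b ^ 2 ≤ a ^ 2 + 3 * (a * r)) (hncb : s ^ 2 ≤ b ^ 2 + 4 * (b * r)) :
    s ^ 2 - 8 * (s * r) ≤ a ^ 2 := by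
  have har : a * r ≤ s * r := mul_le_mul_of_nonneg_right has hr
  have hsr : s * (16 * r) ≤ s * s := mul_le_mul_of_nonneg_left hrs hs
  have hb : b ≤ 5 / 4 * s := by
    refine (abs_le_of_sq_le_sq' ?_ (by positivity)).2
    nlinarith
  have hbr : b * r ≤ 5 / 4 * s * r := mul_le_mul_of_nonneg_right hb hr
  linarith

/-- Deterministic core of Lemma 3.6: any arm pulled in Phase II, having Nash confidence
bound `μ̂ + 4√(μ̂ log T / n) ≥ μ*` after `n` samples, has mean `μ` close to the optimal
mean `μ*`, namely `μ ≥ μ* − 8√(μ* log T / n)`. -/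
theorem mean_of_pulled_arm_close_to_optimal (k T : ℕ) (hk : 2 ≤ k) (hT : 2 ≤ T)
    (μstar : ℝ)
    (hμs_lb : 32 * Real.sqrt ((k : ℝ) * Real.log k * Real.log T / T) ≤ μstar)
    (hμs_ub : μstar ≤ 1)
    (μ : ℝ) (hμ0 : 0 < μ) (hμμs : μ ≤ μstar)
    (n : ℕ) (hn0 : 0 < n)
    (hn : 8 * Real.sqrt ((T : ℝ) * Real.log T / ((k : ℝ) * Real.log k)) ≤ (n : ℝ))
    (μhat : ℝ) (hμhat : 0 ≤ μhat)
    (hconc : |μ - μhat| ≤ 3 * Real.sqrt (μ * Real.log T / n))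
    (hncb : μhat + 4 * Real.sqrt (μhat * Real.log T / n) ≥ μstar) :
    μ ≥ μstar - 8 * Real.sqrt (μstar * Real.log T / n) := by
  have hk1 : (1 : ℝ) < k := by exact_mod_cast hk
  have hT1 : (1 : ℝ) < T := by exact_mod_cast hT
  have hn1 : (0 : ℝ) < n := by exact_mod_cast hn0
  have hlogk := Real.log_pos hk1
  have hlogT := Real.log_pos hT1
  have hs0 : 0 ≤ μstar := hμ0.le.trans hμμs
  have hr0 : 0 ≤ Real.log T / n := by positivity
  have hlog := log_le_mul_of_sqrt_le (by positivity) (by positivity) hlogT.le hμs_lb hn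
  have hrs : 16 * Real.sqrt (Real.log T / n) ≤ Real.sqrt μstar := by
    apply Real.le_sqrt_of_sq_le
    rw [mul_pow, Real.sq_sqrt hr0, ← mul_div_assoc, div_le_iff₀ hn1]
    linarith
  rw [mul_div_assoc, Real.sqrt_mul hμ0.le] at hconc
  rw [mul_div_assoc, Real.sqrt_mul hμhat] at hncb
  rw [mul_div_assoc, Real.sqrt_mul hs0]
  have key := sq_sub_le_sq_of_confidence_bound (b := Real.sqrt μhat) (Real.sqrt_nonneg μstar)
    (Real.sqrt_nonneg (Real.log T / n)) (Real.sqrt_nonneg μ) (Real.sqrt_le_sqrt hμμs) hrs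
  rw [Real.sq_sqrt hs0, Real.sq_sqrt hμ0.le, Real.sq_sqrt hμhat] at key
  exact key (by linarith [(abs_le.mp hconc).1]) hncb
end

section
/- Let T ≥ 2, k ≥ 1 and 1 ≤ ℓ ≤ k be integers, let μ* ∈ (0, 1] be real, let m_1, …, m_ℓ be positive integers with ∑_{i=1}^ℓ m_i ≤ T, and let n_1, …, n_ℓ be positive integers with n_i ≥ m_i and μ*·n_i ≥ 256·log T for every i. Then ∏_{i=1}^ℓ (1 − 8√(log T/(μ*·n_i)))^{m_i/T} ≥ 1 − 16√(k·log T/(μ*·T)). (The key deterministic product inequality in the Phase II analysis of Theorem 3.1, combining the numeric inequality (1−x)^a ≥ 1−2ax with the Cauchy–Schwarz inequality.) -/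
/-- A form of the Bernoulli inequality for exponents in `[0, 1]`. -/
theorem one_sub_two_mul_le_rpow {x a : ℝ} (hx0 : 0 ≤ x) (hx : x ≤ 1 / 2) (ha0 : 0 ≤ a)
    (ha1 : a ≤ 1) : 1 - 2 * a * x ≤ (1 - x) ^ a := by
  have hpos : 0 < 1 - x := by linarith
  have hinv : (1 - x)⁻¹ ≤ 1 + 2 * x := by
    rw [inv_le_iff_one_le_mul₀ hpos]
    nlinarith
  have hbern : ((1 - x) ^ a)⁻¹ ≤ 1 + 2 * a * x := by
    rw [← Real.inv_rpow hpos.le]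
    calc ((1 - x)⁻¹) ^ a ≤ (1 + 2 * x) ^ a :=
          Real.rpow_le_rpow (inv_nonneg.2 hpos.le) hinv ha0
      _ ≤ 1 + a * (2 * x) := rpow_one_add_le_one_add_mul_self (by linarith) ha0 ha1
      _ = 1 + 2 * a * x := by ring
  have hpow : 0 < (1 - x) ^ a := Real.rpow_pos_of_pos hpos a
  rw [inv_le_iff_one_le_mul₀ hpow] at hbern
  have hax : 0 ≤ 2 * a * x := by positivity
  nlinarith

/-- The Weierstrass product inequality. -/
theorem one_sub_sum_le_prod_one_sub {ι : Type*} (s : Finset ι) (y : ι → ℝ)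
    (hy0 : ∀ i ∈ s, 0 ≤ y i) (hy1 : ∀ i ∈ s, y i ≤ 1) :
    1 - ∑ i ∈ s, y i ≤ ∏ i ∈ s, (1 - y i) := by
  induction s using Finset.cons_induction with
  | empty => simp
  | cons a s ha ih =>
    simp only [Finset.mem_cons, forall_eq_or_imp] at hy0 hy1
    rw [Finset.sum_cons, Finset.prod_cons]
    have hprod := mul_le_mul_of_nonneg_left (ih hy0.2 hy1.2) (sub_nonneg.2 hy1.1)
    have hsum := mul_nonneg hy0.1 (Finset.sum_nonneg hy0.2)
    linarith

theorem sum_sqrt_le_sqrt_card_mul_sum {ι : Type*} (s : Finset ι) (y : ι → ℝ)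
    (hy : ∀ i ∈ s, 0 ≤ y i) : ∑ i ∈ s, √(y i) ≤ √(s.card * ∑ i ∈ s, y i) := by
  apply Real.le_sqrt_of_sq_le
  calc (∑ i ∈ s, √(y i)) ^ 2 ≤ s.card * ∑ i ∈ s, √(y i) ^ 2 := sq_sum_le_card_mul_sum_sq
    _ = s.card * ∑ i ∈ s, y i := by
      rw [Finset.sum_congr rfl fun i hi => Real.sq_sqrt (hy i hi)]

theorem mul_sqrt_div_le {c p q : ℝ} (hc : 0 ≤ c) (hp : 0 < p) (hpq : p ≤ q) :
    p * √(c / q) ≤ √c * √p := by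
  rw [← Real.sqrt_mul hc]
  apply Real.le_sqrt_of_sq_le
  rw [mul_pow, Real.sq_sqrt (div_nonneg hc (hp.le.trans hpq)), ← mul_div_assoc,
    div_le_iff₀ (hp.trans_le hpq)]
  nlinarith [mul_le_mul_of_nonneg_left hpq (mul_nonneg hc hp.le)]

/-- The key deterministic product inequality in the Phase II analysis of Theorem 3.1:
if `ℓ ≤ k`, `∑ m_i ≤ T`, `n_i ≥ m_i` and `μ* n_i ≥ 256 log T` for every `i`, then
`∏_i (1 − 8√(log T/(μ* n_i)))^(m_i/T) ≥ 1 − 16√(k log T/(μ* T))`.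
Here `^` denotes the real power `Real.rpow`. -/
theorem phase_two_product_bound (T k ℓ : ℕ) (hT : 2 ≤ T) (hk : 1 ≤ k)
    (hℓ1 : 1 ≤ ℓ) (hℓk : ℓ ≤ k)
    (μstar : ℝ) (hμs0 : 0 < μstar) (hμs1 : μstar ≤ 1)
    (m n : Fin ℓ → ℕ)
    (hm : ∀ i, 0 < m i) (hsum : ∑ i, m i ≤ T)
    (hn : ∀ i, 0 < n i) (hnm : ∀ i, m i ≤ n i)
    (hμn : ∀ i, μstar * n i ≥ 256 * Real.log T) :
    ∏ i, (1 - 8 * Real.sqrt (Real.log T / (μstar * n i))) ^ ((m i : ℝ) / T) ≥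
      1 - 16 * Real.sqrt ((k : ℝ) * Real.log T / (μstar * T)) := by
  have hT0 : (0 : ℝ) < T := by positivity
  have hL : 0 ≤ Real.log T := Real.log_natCast_nonneg T
  have hc : 0 ≤ Real.log T / μstar := div_nonneg hL hμs0.le
  have hsumR : ∑ i, (m i : ℝ) ≤ T := by exact_mod_cast hsum
  have hmT (i : Fin ℓ) : (m i : ℝ) / T ≤ 1 := by
    rw [div_le_one hT0]
    exact (Finset.single_le_sum (f := fun i => (m i : ℝ)) (fun _ _ => Nat.cast_nonneg _)
      (Finset.mem_univ i)).trans hsumR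
  set x : Fin ℓ → ℝ := fun i => 8 * √(Real.log T / (μstar * n i)) with hx
  have hx0 (i : Fin ℓ) : 0 ≤ x i := by positivity
  have hx1 (i : Fin ℓ) : x i ≤ 1 / 2 := by
    have hni : (0 : ℝ) < n i := by exact_mod_cast hn i
    have : √(Real.log T / (μstar * n i)) ≤ 1 / 16 := by
      rw [Real.sqrt_le_left (by norm_num), div_le_iff₀ (by positivity)]
      linarith [hμn i]
    simp only [hx]
    linarith
  have hy0 (i : Fin ℓ) : 0 ≤ 2 * ((m i : ℝ) / T) * x i := by
    have := hx0 i
    positivity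
  have hy1 (i : Fin ℓ) : 2 * ((m i : ℝ) / T) * x i ≤ 1 := by
    nlinarith [mul_le_mul (hmT i) (hx1 i) (hx0 i) zero_le_one]
  have hterm (i : Fin ℓ) :
      2 * ((m i : ℝ) / T) * x i ≤ 16 / T * √(Real.log T / μstar) * √(m i) := by
    have h := mul_sqrt_div_le hc (Nat.cast_pos.2 (hm i)) (Nat.cast_le (α := ℝ).2 (hnm i))
    rw [div_div] at h
    calc 2 * ((m i : ℝ) / T) * x i
        = 16 / T * (m i * √(Real.log T / (μstar * n i))) := by simp only [hx]; ring
      _ ≤ 16 / T * (√(Real.log T / μstar) * √(m i)) := by gcongr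
      _ = _ := by ring
  have hsqrt : ∑ i, √(m i : ℝ) ≤ √((k : ℝ) * T) := by
    refine (sum_sqrt_le_sqrt_card_mul_sum _ _ fun _ _ => Nat.cast_nonneg _).trans ?_
    rw [Finset.card_univ, Fintype.card_fin]
    gcongr
  have htotal : ∑ i, 2 * ((m i : ℝ) / T) * x i ≤
      16 * √((k : ℝ) * Real.log T / (μstar * T)) := by
    calc ∑ i, 2 * ((m i : ℝ) / T) * x i
        ≤ 16 / T * √(Real.log T / μstar) * ∑ i, √(m i : ℝ) := by
          rw [Finset.mul_sum]
          exact Finset.sum_le_sum fun i _ => hterm i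
      _ ≤ 16 / T * √(Real.log T / μstar) * √((k : ℝ) * T) := by gcongr
      _ = 16 * (√(Real.log T / μstar * (k * T)) / √((T : ℝ) ^ 2)) := by
          rw [Real.sqrt_mul hc, Real.sqrt_sq hT0.le]
          ring
      _ = 16 * √((k : ℝ) * Real.log T / (μstar * T)) := by
          rw [← Real.sqrt_div' _ (by positivity)]
          congr 2
          field_simp
  calc 1 - 16 * √((k : ℝ) * Real.log T / (μstar * T))
      ≤ 1 - ∑ i, 2 * ((m i : ℝ) / T) * x i := by linarith
    _ ≤ ∏ i, (1 - 2 * ((m i : ℝ) / T) * x i) :=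
        one_sub_sum_le_prod_one_sub _ _ (fun i _ => hy0 i) fun i _ => hy1 i
    _ ≤ ∏ i, (1 - x i) ^ ((m i : ℝ) / T) :=
        Finset.prod_le_prod (fun i _ => sub_nonneg.2 (hy1 i)) fun i _ =>
          one_sub_two_mul_le_rpow (hx0 i) (hx1 i) (by positivity) (hmT i)
end

section
/- Fix c = 3. Let k ≥ 2 and T ≥ 2 be integers, let μ_1, …, μ_k ∈ [0, 1] with μ* := max_i μ_i > 0, and set S := c²·log T/μ*; assume 192S ≤ T. Let y_{i,s} ∈ [0, 1] for 1 ≤ i ≤ k, 1 ≤ s ≤ T be arbitrary reals and define μ̂_{i,s} := (1/s)·∑_{r=1}^s y_{i,r}. Assume: (E2) for every arm i with μ_i > μ*/64 and every integer s with 64S ≤ s ≤ T, |μ_i − μ̂_{i,s}| ≤ c√(μ_i·log T/s); and (E3) for every arm j with μ_j ≤ μ*/64 and every integer s with 64S ≤ s ≤ T, μ̂_{j,s} < μ*/32. Then for every arm i and every integer n with 1 ≤ n ≤ 192S, n·μ̂_{i,n} < 210·c²·log T. (Lemma tau:lower of the paper: under the good event, the total observed reward of every arm stays low until 192S samples.)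 -/
/-- Empirical mean of arm `i` based on its first `s` observed rewards
`y i 0, …, y i (s-1)` (out of `T` available rewards). -/
noncomputable def empiricalMean {k T : ℕ} (y : Fin k → Fin T → ℝ) (i : Fin k) (s : ℕ) : ℝ :=
  (1 / (s : ℝ)) * ∑ r : Fin T, if (r : ℕ) < s then y i r else 0

/-- For `s ≠ 0`, the total reward `s · μ̂_{i,s}` is the sum of the first `s` rewards. -/
lemma natCast_mul_empiricalMean {k T : ℕ} (y : Fin k → Fin T → ℝ) (i : Fin k) {s : ℕ}
    (hs : s ≠ 0) :
    (s : ℝ) * empiricalMean y i s = ∑ r : Fin T, if (r : ℕ) < s then y i r else 0 := by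
  have : (s : ℝ) ≠ 0 := Nat.cast_ne_zero.mpr hs
  unfold empiricalMean
  field_simp

/-- For nonnegative rewards, the total reward of an arm is monotone in the sample count. -/
lemma natCast_mul_empiricalMean_mono {k T : ℕ} {y : Fin k → Fin T → ℝ} {i : Fin k}
    (hy : ∀ r, 0 ≤ y i r) {m n : ℕ} (hm : m ≠ 0) (hmn : m ≤ n) :
    (m : ℝ) * empiricalMean y i m ≤ (n : ℝ) * empiricalMean y i n := by
  rw [natCast_mul_empiricalMean y i hm, natCast_mul_empiricalMean y i (by lia)]
  refine Finset.sum_le_sum fun r _ ↦ ?_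
  have := hy r
  split_ifs <;> first | lia | linarith

/-- Lemma tau:lower (with `c = 3`): under the concentration events `E2` and `E3`, for
every arm `i` and every sample count `1 ≤ n ≤ 192 S` (where `S = c² log T / μ*`), the
total observed reward satisfies `n · μ̂_{i,n} < 210 c² log T`. -/
theorem total_reward_low_until_192S (c : ℝ) (hc : c = 3)
    (k T : ℕ) (hk : 2 ≤ k) (hT : 2 ≤ T)
    (μ : Fin k → ℝ) (hμ : ∀ i, μ i ∈ Set.Icc (0 : ℝ) 1)
    (μstar : ℝ) (hμstar : IsGreatest (Set.range μ) μstar) (hμs0 : 0 < μstar)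
    (S : ℝ) (hS : S = c ^ 2 * Real.log T / μstar) (hST : 192 * S ≤ (T : ℝ))
    (y : Fin k → Fin T → ℝ) (hy : ∀ i s, y i s ∈ Set.Icc (0 : ℝ) 1)
    (hE2 : ∀ i : Fin k, μ i > μstar / 64 → ∀ s : ℕ, 64 * S ≤ (s : ℝ) → s ≤ T →
      |μ i - empiricalMean y i s| ≤ c * Real.sqrt (μ i * Real.log T / s))
    (hE3 : ∀ j : Fin k, μ j ≤ μstar / 64 → ∀ s : ℕ, 64 * S ≤ (s : ℝ) → s ≤ T →
      empiricalMean y j s < μstar / 32) :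
    ∀ i : Fin k, ∀ n : ℕ, 1 ≤ n → (n : ℝ) ≤ 192 * S →
      (n : ℝ) * empiricalMean y i n < 210 * c ^ 2 * Real.log T := by
  intro i n hn hnS
  subst hc
  have hL : 1 / 2 < Real.log T := by
    have h2 : Real.log 2 ≤ Real.log T :=
      Real.log_le_log (by norm_num) (by exact_mod_cast hT)
    linarith [Real.log_two_gt_d9]
  set L := Real.log T
  obtain ⟨⟨j, hj⟩, hub⟩ := hμstar
  have hμstar_le : μstar ≤ 1 := hj ▸ (hμ j).2
  have hSμ : S * μstar = 9 * L := by
    rw [hS]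
    field_simp
    norm_num
  have hS1 : 1 ≤ S := by nlinarith
  -- The total reward is monotone, so it suffices to bound it at `N = ⌊192 S⌋`.
  set N := ⌊192 * S⌋₊
  have hNle : (N : ℝ) ≤ 192 * S := Nat.floor_le (by linarith)
  have hNlt : 192 * S < N + 1 := Nat.lt_floor_add_one _
  have hN64 : 64 * S ≤ (N : ℝ) := by linarith
  have hNpos : (0 : ℝ) < N := by linarith
  have hNT : N ≤ T := by exact_mod_cast hNle.trans hST
  have hNμ : (N : ℝ) * μstar ≤ 1728 * L := by nlinarith
  refine (natCast_mul_empiricalMean_mono (fun r ↦ (hy i r).1) (by lia)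
    (Nat.le_floor hnS)).trans_lt ?_
  rcases le_or_gt (μ i) (μstar / 64) with hi | hi
  · nlinarith [hE3 i hi N hN64 hNT]
  · have hdev := (abs_le.mp (hE2 i hi N hN64 hNT)).1
    have hNμi : (N : ℝ) * μ i ≤ 1728 * L :=
      (mul_le_mul_of_nonneg_left (hub ⟨i, rfl⟩) hNpos.le).trans hNμ
    have hsqrt : Real.sqrt (μ i * L / N) ≤ 42 * L / N := by
      refine Real.sqrt_le_iff.mpr ⟨by positivity, ?_⟩
      rw [div_pow, div_le_div_iff₀ hNpos (by positivity)]
      have : (N : ℝ) * μ i * (L * N) ≤ 1764 * L * (L * N) :=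
        mul_le_mul_of_nonneg_right (by linarith) (by positivity)
      nlinarith
    have hmean : empiricalMean y i N ≤ μ i + 3 * (42 * L / N) := by linarith
    calc (N : ℝ) * empiricalMean y i N
        ≤ N * (μ i + 3 * (42 * L / N)) := by gcongr
      _ = N * μ i + 126 * L := by field_simp; ring
      _ < 210 * 3 ^ 2 * L := by linarith
end

section
/- Fix c = 3. Let k ≥ 2 and T ≥ 2 be integers, let μ_1, …, μ_k ∈ [0, 1] with μ* := max_i μ_i > 0, set S := c²·log T/μ*, and let W be a real with √T ≤ W ≤ T; assume 968kS ≤ T. Let u : {1, …, T} → {1, …, k} be any sequence of arm choices and let y_{i,s} ∈ [0, 1] for 1 ≤ i ≤ k, 1 ≤ s ≤ T be arbitrary reals; define n_i(r) := #{t ≤ r : u(t) = i}, μ̂_{i,s} := (1/s)·∑_{r=1}^s y_{i,r}, and the total reward R_i(r) := ∑_{s=1}^{n_i(r)} y_{i,s}. Assume: (E1) for every integer r with 128kS ≤ r ≤ T and every arm i, r/(2k) ≤ n_i(r) ≤ 3r/(2k); (E2) for every arm i with μ_i > μ*/64 and every integer s with 64S ≤ s ≤ T, |μ_i − μ̂_{i,s}|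 ≤ c√(μ_i·log T/s); (E3) for every arm j with μ_j ≤ μ*/64 and every integer s with 64S ≤ s ≤ T, μ̂_{j,s} < μ*/32. Then there exists an integer r ≤ T with max_i R_i(r) > 420·c²·log W, and the least such integer τ satisfies 128kS ≤ τ ≤ 968kS. (Lemma tau:anytime of the paper.) -/
/-- `pullCount u i r` = number of rounds `t` among the first `r` uniform-sampling rounds
in which arm `i` is chosen. -/
def pullCount {k T : ℕ} (u : Fin T → Fin k) (i : Fin k) (r : ℕ) : ℕ :=
  (Finset.univ.filter fun t : Fin T => (t : ℕ) < r ∧ u t = i).card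

/-- Empirical mean of arm `i` based on its first `s` observed rewards. -/
noncomputable def empMean12 {k T : ℕ} (y : Fin k → Fin T → ℝ) (i : Fin k) (s : ℕ) : ℝ :=
  (1 / (s : ℝ)) * ∑ r : Fin T, if (r : ℕ) < s then y i r else 0

/-- `totalReward u y i r` = sum of the first `pullCount u i r` observed rewards of arm
`i`, i.e. the total reward observed for arm `i` during the first `r` rounds. -/
noncomputable def totalReward {k T : ℕ} (u : Fin T → Fin k) (y : Fin k → Fin T → ℝ)
    (i : Fin k) (r : ℕ) : ℝ :=
  ∑ s : Fin T, if (s : ℕ) < pullCount u i r then y i s else 0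

theorem pullCount_mono {k T : ℕ} (u : Fin T → Fin k) (i : Fin k) :
    Monotone (pullCount u i) := by
  intro r r' h
  unfold pullCount
  refine Finset.card_le_card fun t ht => ?_
  simp only [Finset.mem_filter, Finset.mem_univ, true_and] at ht ⊢
  exact ⟨ht.1.trans_le h, ht.2⟩

theorem pullCount_le {k T : ℕ} (u : Fin T → Fin k) (i : Fin k) (r : ℕ) :
    pullCount u i r ≤ T := by
  simpa [pullCount] using Finset.card_le_univ (Finset.univ.filter fun t : Fin T => (t : ℕ) < r ∧ u t = i)

theorem totalReward_mono {k T : ℕ} (u : Fin T → Fin k) (y : Fin k → Fin T → ℝ)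
    (hy : ∀ i s, 0 ≤ y i s) (i : Fin k) : Monotone (totalReward u y i) := by
  intro r r' h
  unfold totalReward
  refine Finset.sum_le_sum fun s _ => ?_
  have hn := pullCount_mono u i h
  have h0 := hy i s
  split_ifs <;> first | omega | linarith

theorem totalReward_eq_mul_empMean12 {k T : ℕ} (u : Fin T → Fin k) (y : Fin k → Fin T → ℝ)
    (i : Fin k) (r : ℕ) :
    totalReward u y i r = pullCount u i r * empMean12 y i (pullCount u i r) := by
  unfold totalReward empMean12
  rcases Nat.eq_zero_or_pos (pullCount u i r) with h | h
  · simp [h]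
  · have : (pullCount u i r : ℝ) ≠ 0 := by positivity
    field_simp

/-- A deviation of `c √(m L / s)` of an average of `s` terms is a deviation `d` of the sum,
with `d ^ 2 = (s m) (c ^ 2 L)`. -/
theorem exists_abs_mul_sub_le_of_abs_sub_le {c m L s e : ℝ} (hm : 0 ≤ m)
    (hL : 0 ≤ L) (hs : 0 < s) (h : |m - e| ≤ c * Real.sqrt (m * L / s)) :
    ∃ d : ℝ, d ^ 2 = s * m * (c ^ 2 * L) ∧ |s * m - s * e| ≤ d := by
  refine ⟨s * (c * Real.sqrt (m * L / s)), ?_, ?_⟩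
  · rw [mul_pow, mul_pow, Real.sq_sqrt (by positivity)]
    field_simp
  · rw [← mul_sub, abs_mul, abs_of_pos hs]
    exact mul_le_mul_of_nonneg_left h hs.le

theorem le_mul_of_sq_eq_mul_of_le {d x A : ℝ} (hA : 0 ≤ A) (hd : d ^ 2 = x * A)
    (hx : x ≤ 193 * A) : d ≤ 14 * A := by
  refine le_of_abs_le (abs_le_of_sq_le_sq ?_ (by positivity))
  nlinarith [mul_le_mul_of_nonneg_right hx hA, mul_nonneg hA hA]

theorem le_div_of_sq_eq_mul_of_le {d x A : ℝ} (hA : 0 ≤ A) (hd : d ^ 2 = x * A)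
    (hx : 483 * A ≤ x) : d ≤ x / 20 := by
  have hx0 : 0 ≤ x := by linarith
  refine le_of_abs_le (abs_le_of_sq_le_sq ?_ (by positivity))
  nlinarith [mul_le_mul_of_nonneg_left hx hx0, mul_nonneg hx0 hx0]

/-- Lemma tau:anytime (with `c = 3`): under the good-event assumptions `E1`, `E2`, `E3`,
there is a round `r ≤ T` of uniform sampling at which some arm's total observed reward
exceeds `420 c² log W`, and the least such round `τ` satisfies `128 k S ≤ τ ≤ 968 k S`. -/
theorem phase_one_stopping_time_bounds (c : ℝ) (hc : c = 3)
    (k T : ℕ) (hk : 2 ≤ k) (hT : 2 ≤ T)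
    (μ : Fin k → ℝ) (hμ : ∀ i, μ i ∈ Set.Icc (0 : ℝ) 1)
    (μstar : ℝ) (hμstar : IsGreatest (Set.range μ) μstar) (hμs0 : 0 < μstar)
    (S : ℝ) (hS : S = c ^ 2 * Real.log T / μstar)
    (W : ℝ) (hW1 : Real.sqrt T ≤ W) (hW2 : W ≤ T)
    (hST : 968 * k * S ≤ (T : ℝ))
    (u : Fin T → Fin k)
    (y : Fin k → Fin T → ℝ) (hy : ∀ i s, y i s ∈ Set.Icc (0 : ℝ) 1)
    (hE1 : ∀ r : ℕ, 128 * k * S ≤ (r : ℝ) → r ≤ T → ∀ i : Fin k,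
      (r : ℝ) / (2 * k) ≤ (pullCount u i r : ℝ) ∧
        (pullCount u i r : ℝ) ≤ 3 * r / (2 * k))
    (hE2 : ∀ i : Fin k, μ i > μstar / 64 → ∀ s : ℕ, 64 * S ≤ (s : ℝ) → s ≤ T →
      |μ i - empMean12 y i s| ≤ c * Real.sqrt (μ i * Real.log T / s))
    (hE3 : ∀ j : Fin k, μ j ≤ μstar / 64 → ∀ s : ℕ, 64 * S ≤ (s : ℝ) → s ≤ T →
      empMean12 y j s < μstar / 32) :
    ∃ τ : ℕ, τ ≤ T ∧ (∃ i : Fin k, totalReward u y i τ > 420 * c ^ 2 * Real.log W) ∧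
      (∀ r : ℕ, r < τ → ∀ i : Fin k, totalReward u y i r ≤ 420 * c ^ 2 * Real.log W) ∧
      128 * k * S ≤ (τ : ℝ) ∧ (τ : ℝ) ≤ 968 * k * S := by
  have hT' : (2 : ℝ) ≤ T := by exact_mod_cast hT
  have hk' : (2 : ℝ) ≤ k := by exact_mod_cast hk
  have hlog2 := Real.log_two_gt_d9
  have hL : Real.log 2 ≤ Real.log T := Real.log_le_log (by norm_num) hT'
  have hsqrt : 0 < Real.sqrt T := Real.sqrt_pos.2 (by linarith)
  have hWlo : Real.log T / 2 ≤ Real.log W := by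
    rw [← Real.log_sqrt (by linarith)]
    exact Real.log_le_log hsqrt hW1
  have hWhi : Real.log W ≤ Real.log T := Real.log_le_log (hsqrt.trans_le hW1) hW2
  obtain ⟨⟨iopt, hiopt⟩, hub⟩ := hμstar
  have hμle : ∀ i, μ i ≤ μstar := fun i => hub ⟨i, rfl⟩
  have hμs1 : μstar ≤ 1 := hiopt ▸ (hμ iopt).2
  subst hc
  generalize Real.log T = L at *
  generalize Real.log W = V at *
  have hLpos : 0 < L := by linarith
  have hSμ : S * μstar = 9 * L := by rw [hS]; field_simp; norm_num
  have hS6 : 6 ≤ S := by nlinarith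
  have hkS : 12 ≤ k * S := by nlinarith
  have hk0 : (0 : ℝ) < 2 * k := by linarith
  have hmono := totalReward_mono u y (fun i s => (hy i s).1)
  have before : ∀ r : ℕ, (r : ℝ) < 128 * k * S → ∀ i,
      totalReward u y i r ≤ 420 * 3 ^ 2 * V := by
    intro r hr i
    set r₀ := ⌈128 * k * S⌉₊ with hr₀
    have hle : 128 * k * S ≤ (r₀ : ℝ) := Nat.le_ceil _
    have hlt : (r₀ : ℝ) < 128 * k * S + 1 := Nat.ceil_lt_add_one (by linarith)
    have hr₀T : r₀ ≤ T := by
      have : (r₀ : ℝ) ≤ T := by linarith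
      exact_mod_cast this
    have hrr₀ : r ≤ r₀ := by
      have : (r : ℝ) ≤ r₀ := by linarith
      exact_mod_cast this
    refine (hmono i hrr₀).trans ?_
    obtain ⟨h1, h2⟩ := hE1 r₀ hle hr₀T i
    have hnT := pullCount_le u i r₀
    rw [totalReward_eq_mul_empMean12]
    generalize pullCount u i r₀ = n at *
    rw [div_le_iff₀ hk0] at h1
    rw [le_div_iff₀ hk0] at h2
    have hn1 : 64 * S ≤ (n : ℝ) := by nlinarith
    have hn2 : (n : ℝ) ≤ 193 * S := by nlinarith
    have hn0 : (0 : ℝ) < n := by linarith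
    rcases le_or_gt (μ i) (μstar / 64) with hi | hi
    · have h3 := hE3 i hi n hn1 hnT
      nlinarith
    · obtain ⟨d, hd, habs⟩ := exists_abs_mul_sub_le_of_abs_sub_le (hμ i).1
        hLpos.le hn0 (hE2 i hi n hn1 hnT)
      have hx : n * μ i ≤ 193 * (9 * L) := by
        calc n * μ i ≤ 193 * S * μstar :=
              mul_le_mul hn2 (hμle i) (hμ i).1 (by linarith)
          _ = 193 * (9 * L) := by rw [mul_assoc, hSμ]
      have hd' : d ≤ 14 * (9 * L) :=
        le_mul_of_sq_eq_mul_of_le (by linarith) (by rw [hd]; norm_num) hx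
      have := (abs_le.1 habs).1
      linarith
  have after : ∃ r : ℕ, r ≤ T ∧ (r : ℝ) ≤ 968 * k * S ∧
      420 * 3 ^ 2 * V < totalReward u y iopt r := by
    set r₁ := ⌊968 * k * S⌋₊ with hr₁
    have hle : (r₁ : ℝ) ≤ 968 * k * S := Nat.floor_le (by linarith)
    have hlt : 968 * k * S < (r₁ : ℝ) + 1 := Nat.lt_floor_add_one _
    have hr₁T : r₁ ≤ T := by
      have : (r₁ : ℝ) ≤ T := by linarith
      exact_mod_cast this
    refine ⟨r₁, hr₁T, hle, ?_⟩
    obtain ⟨h1, -⟩ := hE1 r₁ (by linarith) hr₁T iopt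
    have hnT := pullCount_le u iopt r₁
    rw [totalReward_eq_mul_empMean12]
    generalize pullCount u iopt r₁ = n at *
    rw [div_le_iff₀ hk0] at h1
    have hn1 : 483 * S ≤ (n : ℝ) := by nlinarith
    have hn0 : (0 : ℝ) < n := by linarith
    obtain ⟨d, hd, habs⟩ := exists_abs_mul_sub_le_of_abs_sub_le (hμ iopt).1
      hLpos.le hn0 (hE2 iopt (by rw [hiopt]; linarith) n (by linarith) hnT)
    rw [hiopt] at hd habs
    have hx : 483 * (9 * L) ≤ n * μstar := by
      rw [← hSμ, ← mul_assoc]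
      exact mul_le_mul_of_nonneg_right hn1 hμs0.le
    have hd' : d ≤ n * μstar / 20 :=
      le_div_of_sq_eq_mul_of_le (by linarith) (by rw [hd]; norm_num) hx
    have := (abs_le.1 habs).2
    linarith
  classical
  obtain ⟨r₁, hr₁T, hr₁, hgt⟩ := after
  have hex : ∃ r : ℕ, ∃ i, totalReward u y i r > 420 * 3 ^ 2 * V := ⟨r₁, iopt, hgt⟩
  have hfind : Nat.find hex ≤ r₁ := Nat.find_min' hex ⟨iopt, hgt⟩
  refine ⟨Nat.find hex, hfind.trans hr₁T, Nat.find_spec hex, fun r hr i => ?_, ?_, ?_⟩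
  · exact not_lt.1 fun h => Nat.find_min hex hr ⟨i, h⟩
  · by_contra! h
    obtain ⟨i, hi⟩ := Nat.find_spec hex
    exact absurd hi (not_lt.2 (before _ h i))
  · exact (Nat.cast_le.2 hfind).trans hr₁
end

section
/- Fix c = 3. Let T ≥ 2 be an integer and W a real with √T ≤ W ≤ T, let μ* ∈ (0, 1], set S := c²·log T/μ*, let n be a positive integer with n ≥ 64S, and let μ̂ ≥ 0 be a real with |μ* − μ̂| ≤ c√(μ*·log T/n). Then μ̂ + 2c√(2·μ̂·log W/n) ≥ μ*. (Deterministic core of Lemma lem:emp:anytime: under the good event E, the Nash confidence bound of the optimal arm in the Modified NCB algorithm is at least μ* throughout Phase 2.) -/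
/-- Deterministic core of Lemma lem:emp:anytime (with `c = 3`): if `n ≥ 64 S` where
`S = c² log T / μ*`, and `|μ* − μ̂| ≤ c√(μ* log T / n)`, then the Nash confidence bound
`μ̂ + 2c√(2 μ̂ log W / n)` is at least `μ*`. -/
theorem modified_ncb_of_optimal_arm_ge_mean (c : ℝ) (hc : c = 3)
    (T : ℕ) (hT : 2 ≤ T) (W : ℝ) (hW1 : Real.sqrt T ≤ W) (hW2 : W ≤ T)
    (μstar : ℝ) (hμs0 : 0 < μstar) (hμs1 : μstar ≤ 1)
    (S : ℝ) (hS : S = c ^ 2 * Real.log T / μstar)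
    (n : ℕ) (hn0 : 0 < n) (hn : 64 * S ≤ (n : ℝ))
    (μhat : ℝ) (hμhat : 0 ≤ μhat)
    (hconc : |μstar - μhat| ≤ c * Real.sqrt (μstar * Real.log T / n)) :
    μhat + 2 * c * Real.sqrt (2 * μhat * Real.log W / n) ≥ μstar := by
  subst hc hS
  have hT' : (2 : ℝ) ≤ T := by exact_mod_cast hT
  have hn' : (0 : ℝ) < n := by exact_mod_cast hn0
  have hL : 0 < Real.log T := Real.log_pos (by linarith)
  have hlogW : Real.log T ≤ 2 * Real.log W := by
    have h := Real.log_le_log (Real.sqrt_pos.2 (by linarith)) hW1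
    rw [Real.log_sqrt (by linarith)] at h
    linarith
  have hradius : Real.sqrt (μstar * Real.log T / n) ≤ μstar / 24 := by
    refine Real.sqrt_le_iff.2 ⟨by positivity, ?_⟩
    rw [← mul_div_assoc, div_le_iff₀ hμs0] at hn
    rw [div_le_iff₀ hn']
    nlinarith
  have hdev := (le_abs_self _).trans hconc
  have hwidth : Real.sqrt (μstar * Real.log T / n) / 2
      ≤ Real.sqrt (2 * μhat * Real.log W / n) := by
    refine Real.le_sqrt_of_sq_le ?_
    rw [div_pow, Real.sq_sqrt (by positivity), div_div, mul_comm (n : ℝ), ← div_div]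
    gcongr
    nlinarith [mul_le_mul_of_nonneg_left hlogW hμhat]
  linarith
end

section
/- Fix c = 3. Let T ≥ 2 be an integer, let μ* ∈ (0, 1], set S := c²·log T/μ*, let μ be a real with 0 < μ ≤ μ*, let n be a positive integer with n ≥ 64S, and let μ̂ ≥ 0 be a real such that |μ − μ̂| ≤ c√(μ·log T/n) and μ̂ + 2c√(2·μ̂·log T/n) ≥ μ*. Then μ ≥ μ* − 4c√(μ*·log T/n). (Deterministic core of Lemma lem:suboptimal_arms:anytime: any arm pulled in Phase 2 of the Modified NCB algorithm, with n = T_i − 1 samples, has mean close to the optimal μ*.) -/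
/-- Deterministic core of Lemma lem:suboptimal_arms:anytime (with `c = 3`): any arm with
mean `μ ≤ μ*`, empirical mean `μ̂` based on `n ≥ 64 S` samples (`S = c² log T / μ*`),
satisfying the concentration bound `|μ − μ̂| ≤ c√(μ log T / n)` and having Nash confidence
bound `μ̂ + 2c√(2 μ̂ log T / n) ≥ μ*`, has mean `μ ≥ μ* − 4c√(μ* log T / n)`. -/
theorem modified_mean_of_pulled_arm_close_to_optimal (c : ℝ) (hc : c = 3)
    (T : ℕ) (hT : 2 ≤ T)
    (μstar : ℝ) (hμs0 : 0 < μstar) (hμs1 : μstar ≤ 1)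
    (S : ℝ) (hS : S = c ^ 2 * Real.log T / μstar)
    (μ : ℝ) (hμ0 : 0 < μ) (hμμs : μ ≤ μstar)
    (n : ℕ) (hn0 : 0 < n) (hn : 64 * S ≤ (n : ℝ))
    (μhat : ℝ) (hμhat : 0 ≤ μhat)
    (hconc : |μ - μhat| ≤ c * Real.sqrt (μ * Real.log T / n))
    (hncb : μhat + 2 * c * Real.sqrt (2 * μhat * Real.log T / n) ≥ μstar) :
    μ ≥ μstar - 4 * c * Real.sqrt (μstar * Real.log T / n) := by
  subst hc
  by_contra! hlt
  have hL : 0 ≤ Real.log T / n :=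
    div_nonneg (Real.log_natCast_nonneg T) (Nat.cast_nonneg n)
  have hs := Real.sqrt_nonneg (μstar * Real.log T / n)
  have hμ_sqrt : √(μ * Real.log T / n) ≤ √(μstar * Real.log T / n) := by
    apply Real.sqrt_le_sqrt
    rw [mul_div_assoc, mul_div_assoc]
    gcongr
  have hhat_le : μhat ≤ μstar := by linarith [(abs_le.mp hconc).1]
  have hhat_sqrt : √(2 * μhat * Real.log T / n) ≤ 3 / 2 * √(μstar * Real.log T / n) := by
    rw [Real.sqrt_le_left (by positivity), mul_pow, Real.sq_sqrt
      (by rw [mul_div_assoc]; positivity), mul_div_assoc, mul_div_assoc]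
    nlinarith [mul_le_mul_of_nonneg_right hhat_le hL, mul_nonneg hμs0.le hL]
  linarith [(abs_le.mp hconc).1]
end
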